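/- arXiv:math/9809080 — 2 statements merged into one kernel-verified Lean document; each statement's English description precedes it below -/
import Mathlib

section
/- Let a ∈ 𝒜 and A := [[0, a],[a*, 0]] ∈ M₂(𝒜). Let N₁ be the unital subalgebra of M₂(𝒜) generated by A together with 𝒟, and let N₂ := M₂(ℂ1). Then the following are equivalent: (i) N₁ and N₂ are free with amalgamation over 𝒟, i.e. E_D(X₁ X₂ ⋯ Xₙ) = 0 whenever n ≥ 1, each Xₘ lies in N₁ or in N₂ with consecutive factors from different of the two algebras, and E_D(Xₘ) = 0 for every m; (ii) a satisfies the alternating-word condition (i.e., a is R-diagonal). (Proposition 3.8.) -/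
open scoped BigOperators
open ComplexOrder

noncomputable section

variable {A : Type*} [Ring A] [Algebra ℂ A] [StarRing A]

/-- 2×2 matrices over `A`. -/
abbrev M₂ (A : Type*) := Matrix (Fin 2) (Fin 2) A

/-- The matrix `A = [[0, a], [a*, 0]]`. -/
def Amat (a : A) : M₂ A := !![0, a; star a, 0]

/-- The conditional expectation `E_D : M₂(𝒜) → 𝒟` onto the scalar diagonal matrices. -/
def ED (φ : A →ₗ[ℂ] ℂ) (X : M₂ A) : M₂ A :=
  !![algebraMap ℂ A (φ (X 0 0)), 0; 0, algebraMap ℂ A (φ (X 1 1))]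

/-- Membership in `M₂(ℂ1)`, the scalar matrices. -/
def IsScalarMat (X : M₂ A) : Prop := ∀ i j, ∃ c : ℂ, X i j = algebraMap ℂ A c

/-- Membership in `𝒟`, the scalar diagonal matrices. -/
def IsDiagScalar (X : M₂ A) : Prop :=
  (∃ c : ℂ, X 0 0 = algebraMap ℂ A c) ∧ (∃ c : ℂ, X 1 1 = algebraMap ℂ A c) ∧
    X 0 1 = 0 ∧ X 1 0 = 0

/-- The elements `w_{ij;k}(b)` of Lemma 3.9 (indices shifted: `0 ↔ 1`, `1 ↔ 2`). -/
def wElt (φ : A →ₗ[ℂ] ℂ) (b : A) (i j : Fin 2) (k : ℕ) : A :=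
  if i = 0 then
    if j = 0 then (b * star b) ^ k - algebraMap ℂ A (φ ((b * star b) ^ k))
    else b * (star b * b) ^ (k - 1)
  else
    if j = 0 then star b * (b * star b) ^ (k - 1)
    else (star b * b) ^ k - algebraMap ℂ A (φ ((star b * b) ^ k))

/-- The alternating-word condition (R-diagonality). -/
def AltWordCond (φ : A →ₗ[ℂ] ℂ) (b : A) : Prop :=
  ∀ (n : ℕ), 0 < n → ∀ (i : Fin (n + 1) → Fin 2) (k : Fin n → ℕ), (∀ m, 1 ≤ k m) →
    φ ((List.ofFn fun m : Fin n =>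
        wElt φ b (1 - i m.castSucc) (i m.succ) (k m)).prod) = 0

/-- `N₁ = Alg({A} ∪ 𝒟)` and `N₂ = M₂(ℂ1)` are free with amalgamation over `𝒟`:
`E_D` vanishes on every alternating product of `E_D`-centered elements of `N₁`, `N₂`. -/
def FreeAmalgOverD (φ : A →ₗ[ℂ] ℂ) (a : A) : Prop :=
  ∀ (n : ℕ) (t : Fin (n + 1) → Fin 2) (Z : Fin (n + 1) → M₂ A),
    (∀ m, Z m ∈ (if t m = 0 then
        ((Algebra.adjoin ℂ (insert (Amat a) {X : M₂ A | IsDiagScalar X}) :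
          Subalgebra ℂ (M₂ A)) : Set (M₂ A))
      else {X : M₂ A | IsScalarMat X})) →
    (∀ m, ED φ (Z m) = 0) →
    (∀ m : Fin n, t m.castSucc ≠ t m.succ) →
    ED φ ((List.ofFn Z).prod) = 0

/-- Letters allowed in an alternating product. -/
def GoodLetter (φ : A →ₗ[ℂ] ℂ) (a : A) (t : Fin 2) (Z : M₂ A) : Prop :=
  (Z ∈ (if t = 0 then
        ((Algebra.adjoin ℂ (insert (Amat a) {X : M₂ A | IsDiagScalar X}) :
          Subalgebra ℂ (M₂ A)) : Set (M₂ A))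
      else {X : M₂ A | IsScalarMat X})) ∧ ED φ Z = 0

/-- Alternating products whose first letter has type `t`. -/
inductive AltProd (φ : A →ₗ[ℂ] ℂ) (a : A) : Fin 2 → M₂ A → Prop
  | single (t : Fin 2) (Z : M₂ A) (h : GoodLetter φ a t Z) : AltProd φ a t Z
  | cons (t : Fin 2) (Z M : M₂ A) (h : GoodLetter φ a t Z) (hM : AltProd φ a (1 - t) M) :
      AltProd φ a t (Z * M)

/-- Words in the elements `w`, from index `p` to index `q`. -/
inductive WWord (φ : A →ₗ[ℂ] ℂ) (a : A) : Fin 2 → Fin 2 → A → Prop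
  | single (p q : Fin 2) (k : ℕ) (h : 1 ≤ k) : WWord φ a p q (wElt φ a p q k)
  | cons (p i q : Fin 2) (k : ℕ) (x : A) (h : 1 ≤ k) (hx : WWord φ a (1 - i) q x) :
      WWord φ a p q (wElt φ a p i k * x)

lemma fin2_sub_ne (t : Fin 2) : t ≠ 1 - t := by
  revert t; decide

lemma fin2_eq_sub {s t : Fin 2} (h : s ≠ t) : t = 1 - s := by
  revert s t; decide

lemma fin2_sub_sub (t : Fin 2) : 1 - (1 - t) = t := by
  revert t; decide

lemma altProd_of_fun (φ : A →ₗ[ℂ] ℂ) (a : A) : ∀ (n : ℕ) (t : Fin (n + 1) → Fin 2)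
    (Z : Fin (n + 1) → M₂ A), (∀ m, GoodLetter φ a (t m) (Z m)) →
    (∀ m : Fin n, t m.castSucc ≠ t m.succ) → AltProd φ a (t 0) (List.ofFn Z).prod := by
  intro n
  induction n with
  | zero =>
    intro t Z h _
    have := AltProd.single (t 0) (Z 0) (h 0)
    simpa using this
  | succ n ih =>
    intro t Z h hne
    have h1 := ih (fun m => t m.succ) (fun m => Z m.succ) (fun m => h m.succ)
      (fun m => hne m.succ)
    rw [List.ofFn_succ, List.prod_cons]
    refine AltProd.cons _ _ _ (h 0) ?_
    have h2 : t (Fin.succ 0) = 1 - t 0 := fin2_eq_sub (hne 0)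
    rw [← h2]
    exact h1

lemma fun_of_altProd (φ : A →ₗ[ℂ] ℂ) (a : A) {s : Fin 2} {M : M₂ A} (h : AltProd φ a s M) :
    ∃ (n : ℕ) (t : Fin (n + 1) → Fin 2) (Z : Fin (n + 1) → M₂ A),
      (∀ m, GoodLetter φ a (t m) (Z m)) ∧ (∀ m : Fin n, t m.castSucc ≠ t m.succ) ∧
      t 0 = s ∧ (List.ofFn Z).prod = M := by
  induction h with
  | single t Z h =>
    exact ⟨0, fun _ => t, fun _ => Z, fun _ => h, fun m => m.elim0, rfl, by simp⟩
  | cons t Z M h hM ih =>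
    obtain ⟨n, t', Z', h1, h2, h3, h4⟩ := ih
    refine ⟨n + 1, Fin.cons t t', Fin.cons Z Z', ?_, ?_, rfl, ?_⟩
    · intro m
      refine Fin.cases ?_ (fun m => ?_) m
      · simpa using h
      · simpa using h1 m
    · intro m
      refine Fin.cases ?_ (fun m => ?_) m
      · simpa [h3] using fin2_sub_ne t
      · rw [← Fin.succ_castSucc]
        simpa using h2 m
    · rw [List.ofFn_succ, List.prod_cons]
      simp only [Fin.cons_zero, Fin.cons_succ, h4]

lemma freeAmalg_iff (φ : A →ₗ[ℂ] ℂ) (a : A) :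
    FreeAmalgOverD φ a ↔ ∀ t M, AltProd φ a t M → ED φ M = 0 := by
  constructor
  · intro H t M h
    obtain ⟨n, t', Z, h1, h2, -, rfl⟩ := fun_of_altProd φ a h
    exact H n t' Z (fun m => (h1 m).1) (fun m => (h1 m).2) h2
  · intro H n t Z h1 h2 h3
    exact H _ _ (altProd_of_fun φ a n t Z (fun m => ⟨h1 m, h2 m⟩) h3)

lemma wWord_of_fun (φ : A →ₗ[ℂ] ℂ) (a : A) : ∀ (n : ℕ) (i : Fin (n + 2) → Fin 2)
    (k : Fin (n + 1) → ℕ), (∀ m, 1 ≤ k m) →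
    WWord φ a (1 - i 0) (i (Fin.last _)) (List.ofFn fun m : Fin (n + 1) =>
        wElt φ a (1 - i m.castSucc) (i m.succ) (k m)).prod := by
  intro n
  induction n with
  | zero =>
    intro i k h
    have := WWord.single (φ := φ) (a := a) (1 - i 0) (i 1) (k 0) (h 0)
    simpa using this
  | succ n ih =>
    intro i k h
    have h1 := ih (fun m => i m.succ) (fun m => k m.succ) (fun m => h m.succ)
    rw [List.ofFn_succ, List.prod_cons]
    exact WWord.cons _ _ _ _ _ (h 0) h1

lemma fun_of_wWord (φ : A →ₗ[ℂ] ℂ) (a : A) {p q : Fin 2} {x : A} (h : WWord φ a p q x) :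
    ∃ (n : ℕ) (i : Fin (n + 2) → Fin 2) (k : Fin (n + 1) → ℕ), (∀ m, 1 ≤ k m) ∧
      1 - i 0 = p ∧ (List.ofFn fun m : Fin (n + 1) =>
        wElt φ a (1 - i m.castSucc) (i m.succ) (k m)).prod = x := by
  induction h with
  | single p q k h =>
    refine ⟨0, Fin.cons (1 - p) (fun _ => q), fun _ => k, fun _ => h, fin2_sub_sub p, ?_⟩
    simp [fin2_sub_sub]
  | cons p i q k x h hx ih =>
    obtain ⟨n, i', k', h1, h2, h3⟩ := ih
    refine ⟨n + 1, Fin.cons (1 - p) i', Fin.cons k k', ?_, fin2_sub_sub p, ?_⟩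
    · intro m
      refine Fin.cases ?_ (fun m => ?_) m
      · simpa using h
      · simpa using h1 m
    · have h4 : i' 0 = i := by
        rw [← fin2_sub_sub (i' 0), h2, fin2_sub_sub]
      rw [List.ofFn_succ, List.prod_cons]
      simp only [← Fin.succ_castSucc, Fin.cons_succ, h3]
      simp [fin2_sub_sub, h4]

lemma altWordCond_iff (φ : A →ₗ[ℂ] ℂ) (a : A) :
    AltWordCond φ a ↔ ∀ p q x, WWord φ a p q x → φ x = 0 := by
  constructor
  · intro H p q x h
    obtain ⟨n, i, k, h1, -, rfl⟩ := fun_of_wWord φ a h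
    exact H (n + 1) (Nat.succ_pos _) i k h1
  · intro H n hn i k h
    obtain ⟨m, rfl⟩ : ∃ m, n = m + 1 := ⟨n - 1, by omega⟩
    exact H _ _ _ (wWord_of_fun φ a m i k h)

/-- Uncentered monomials. -/
def vElt (a : A) (i j : Fin 2) (k : ℕ) : A :=
  if i = 0 then
    if j = 0 then (a * star a) ^ k else a * (star a * a) ^ k
  else
    if j = 0 then star a * (a * star a) ^ k else (star a * a) ^ k

lemma pow_swap (x y : A) (k : ℕ) : (x * y) ^ k * x = x * (y * x) ^ k := by
  induction k with
  | zero => simp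
  | succ k ih =>
    calc (x * y) ^ (k + 1) * x = (x * y) * ((x * y) ^ k * x) := by rw [pow_succ', mul_assoc]
      _ = x * (y * x) ^ (k + 1) := by rw [ih, pow_succ']; simp only [mul_assoc]

lemma vElt_mul (a : A) (p i q : Fin 2) (k l : ℕ) :
    ∃ m, vElt a p i k * vElt a i q l = vElt a p q m := by
  have key : ∀ x y : A, x * (y * x) ^ k * (y * (x * y) ^ l) = (x * y) ^ (k + l + 1) := by
    intro x y
    rw [← pow_swap, pow_succ, pow_add, mul_assoc, mul_assoc, ← mul_assoc x y,
      (Commute.refl (x * y)).pow_left l |>.eq]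
  have key2 : ∀ x y : A, (x * y) ^ k * (x * (y * x) ^ l) = x * (y * x) ^ (k + l) := by
    intro x y
    rw [← mul_assoc, pow_swap, mul_assoc, pow_add]
  have key3 : ∀ x y : A, x * (y * x) ^ k * (y * x) ^ l = x * (y * x) ^ (k + l) := by
    intro x y
    rw [mul_assoc, pow_add]
  fin_cases p <;> fin_cases i <;> fin_cases q <;> simp only [vElt] <;> norm_num
  · exact ⟨k + l, (pow_add _ _ _).symm⟩
  · exact ⟨k + l, key2 _ _⟩
  · exact ⟨k + l + 1, key _ _⟩
  · exact ⟨k + l, key3 _ _⟩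
  · exact ⟨k + l, key3 _ _⟩
  · exact ⟨k + l + 1, key _ _⟩
  · exact ⟨k + l, key2 _ _⟩
  · exact ⟨k + l, (pow_add _ _ _).symm⟩

/-- Span of the uncentered monomials. -/
def vSpan (a : A) (p q : Fin 2) : Submodule ℂ A := Submodule.span ℂ (Set.range (vElt a p q))

lemma vSpan_mul (a : A) (p i q : Fin 2) {x y : A} (hx : x ∈ vSpan a p i) (hy : y ∈ vSpan a i q) :
    x * y ∈ vSpan a p q := by
  have h := Submodule.mul_mem_mul hx hy
  rw [vSpan, vSpan, Submodule.span_mul_span] at h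
  refine Submodule.span_mono ?_ h
  rintro _ ⟨_, ⟨k, rfl⟩, _, ⟨l, rfl⟩, rfl⟩
  obtain ⟨m, hm⟩ := vElt_mul a p i q k l
  exact ⟨m, hm.symm⟩

lemma algebraMap_mem_vSpan (a : A) (p : Fin 2) (c : ℂ) : algebraMap ℂ A c ∈ vSpan a p p := by
  rw [Algebra.algebraMap_eq_smul_one]
  refine Submodule.smul_mem _ _ (Submodule.subset_span ⟨0, ?_⟩)
  fin_cases p <;> simp [vElt]

lemma entry_mem_vSpan (a : A) {X : M₂ A}
    (h : X ∈ Algebra.adjoin ℂ (insert (Amat a) {X : M₂ A | IsDiagScalar X})) :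
    ∀ p q, X p q ∈ vSpan a p q := by
  induction h using Algebra.adjoin_induction with
  | mem X hX =>
    rcases hX with rfl | ⟨⟨c, hc⟩, ⟨d, hd⟩, h1, h2⟩
    · intro p q
      fin_cases p <;> fin_cases q <;> simp [Amat]
      · exact Submodule.subset_span ⟨0, by simp [vElt]⟩
      · exact Submodule.subset_span ⟨0, by simp [vElt]⟩
    · intro p q
      fin_cases p <;> fin_cases q <;> simp [hc, hd, h1, h2, algebraMap_mem_vSpan]
  | algebraMap c =>
    intro p q
    rw [Matrix.algebraMap_matrix_apply]
    split_ifs with h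
    · subst h; exact algebraMap_mem_vSpan a p c
    · exact Submodule.zero_mem _
  | add X Y _ _ hX hY => exact fun p q => Submodule.add_mem _ (hX p q) (hY p q)
  | mul X Y _ _ hX hY =>
    intro p q
    rw [Matrix.mul_apply]
    exact Submodule.sum_mem _ fun i _ => vSpan_mul a p i q (hX p i) (hY i q)

lemma map_algebraMap (φ : A →ₗ[ℂ] ℂ) (hφ1 : φ 1 = 1) (c : ℂ) : φ (algebraMap ℂ A c) = c := by
  rw [Algebra.algebraMap_eq_smul_one, map_smul, hφ1, smul_eq_mul, mul_one]

lemma ED_eq_zero_iff (φ : A →ₗ[ℂ] ℂ) (hφ1 : φ 1 = 1) (X : M₂ A) :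
    ED φ X = 0 ↔ ∀ p, φ (X p p) = 0 := by
  constructor
  · intro h p
    have h0 := congrFun (congrFun h p) p
    rw [← map_algebraMap φ hφ1 (φ (X p p))]
    have : ED φ X p p = algebraMap ℂ A (φ (X p p)) := by fin_cases p <;> simp [ED]
    rw [← this, h0]; simp
  · intro h
    ext p q
    fin_cases p <;> fin_cases q <;> simp [ED, h]

/-- Span of the centered monomials. -/
def wSpan (φ : A →ₗ[ℂ] ℂ) (a : A) (p q : Fin 2) : Submodule ℂ A :=
  Submodule.span ℂ {x | ∃ k, 1 ≤ k ∧ wElt φ a p q k = x}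

lemma centered_mem (φ : A →ₗ[ℂ] ℂ) (hφ1 : φ 1 = 1) (a : A) (p q : Fin 2) {x : A}
    (hx : x ∈ vSpan a p q) (h : p = q → φ x = 0) : x ∈ wSpan φ a p q := by
  by_cases hpq : p = q
  · subst hpq
    have key : ∀ y ∈ vSpan a p p, y - algebraMap ℂ A (φ y) ∈ wSpan φ a p p := by
      intro y hy
      induction hy using Submodule.span_induction with
      | mem y hy =>
        obtain ⟨k, rfl⟩ := hy
        rcases Nat.eq_zero_or_pos k with rfl | hk
        · have : vElt a p p 0 = 1 := by fin_cases p <;> simp [vElt]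
          rw [this, hφ1, map_one, sub_self]; exact Submodule.zero_mem _
        · refine Submodule.subset_span ⟨k, hk, ?_⟩
          fin_cases p <;> simp [vElt, wElt]
      | zero => simp
      | add y z _ _ hy hz =>
        have := Submodule.add_mem _ hy hz
        rw [map_add, map_add]
        convert this using 1
        abel
      | smul c y _ hy =>
        have := Submodule.smul_mem _ c hy
        rw [map_smul, smul_eq_mul, map_mul, ← Algebra.smul_def, ← smul_sub]
        exact this
    have := key x hx
    rwa [h rfl, map_zero, sub_zero] at this
  · refine Submodule.span_mono ?_ hx
    rintro _ ⟨k, rfl⟩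
    refine ⟨k + 1, by omega, ?_⟩
    fin_cases p <;> fin_cases q <;> simp_all [vElt, wElt]

/-- Span of the words starting at index `p`. -/
def uSpan (φ : A →ₗ[ℂ] ℂ) (a : A) (p : Fin 2) : Submodule ℂ A :=
  Submodule.span ℂ {x | ∃ q, WWord φ a p q x}

lemma wSpan_le (φ : A →ₗ[ℂ] ℂ) (a : A) (p q : Fin 2) : wSpan φ a p q ≤ uSpan φ a p := by
  refine Submodule.span_mono ?_
  rintro _ ⟨k, hk, rfl⟩
  exact ⟨q, WWord.single p q k hk⟩

lemma wSpan_mul (φ : A →ₗ[ℂ] ℂ) (a : A) (p i : Fin 2) {x y : A} (hx : x ∈ wSpan φ a p i)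
    (hy : y ∈ uSpan φ a (1 - i)) : x * y ∈ uSpan φ a p := by
  have h := Submodule.mul_mem_mul hx hy
  rw [wSpan, uSpan, Submodule.span_mul_span] at h
  refine Submodule.span_mono ?_ h
  rintro _ ⟨_, ⟨k, hk, rfl⟩, y, ⟨q, hq⟩, rfl⟩
  exact ⟨q, WWord.cons p i q k y hk hq⟩

lemma good_zero (φ : A →ₗ[ℂ] ℂ) (hφ1 : φ 1 = 1) (a : A) {Z : M₂ A} (h : GoodLetter φ a 0 Z)
    (p q : Fin 2) : Z p q ∈ wSpan φ a p q := by
  obtain ⟨h1, h2⟩ := h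
  rw [if_pos rfl] at h1
  refine centered_mem φ hφ1 a p q (entry_mem_vSpan a h1 p q) ?_
  rintro rfl
  exact (ED_eq_zero_iff φ hφ1 Z).1 h2 p

lemma good_one (φ : A →ₗ[ℂ] ℂ) (hφ1 : φ 1 = 1) (a : A) {Z : M₂ A} (h : GoodLetter φ a 1 Z)
    (p q : Fin 2) : ∃ c : ℂ, Z p q = algebraMap ℂ A c ∧ (p = q → c = 0) := by
  obtain ⟨h1, h2⟩ := h
  rw [if_neg (by decide)] at h1
  obtain ⟨c, hc⟩ := h1 p q
  refine ⟨c, hc, ?_⟩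
  rintro rfl
  have := (ED_eq_zero_iff φ hφ1 Z).1 h2 p
  rwa [hc, map_algebraMap φ hφ1] at this

lemma altProd_entries (φ : A →ₗ[ℂ] ℂ) (hφ1 : φ 1 = 1) (a : A) {t : Fin 2} {M : M₂ A}
    (h : AltProd φ a t M) :
    (t = 0 → ∀ p q, M p q ∈ uSpan φ a p) ∧
    (t = 1 → (∀ p q, M p q ∈ uSpan φ a (1 - p)) ∨ GoodLetter φ a 1 M) := by
  induction h with
  | single t Z h =>
    refine ⟨?_, ?_⟩
    · rintro rfl p q
      exact wSpan_le φ a p q (good_zero φ hφ1 a h p q)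
    · rintro rfl
      exact Or.inr h
  | cons t Z M h hM ih =>
    refine ⟨?_, ?_⟩
    · rintro rfl p q
      rw [Matrix.mul_apply]
      refine Submodule.sum_mem _ fun i _ => ?_
      have hZ := good_zero φ hφ1 a h p i
      rcases ih.2 (by decide) with h1 | h1
      · exact wSpan_mul φ a p i hZ (h1 i q)
      · obtain ⟨c, hc, -⟩ := good_one φ hφ1 a h1 i q
        rw [hc, ← Algebra.commutes, ← Algebra.smul_def]
        exact Submodule.smul_mem _ _ (wSpan_le φ a p i hZ)
    · rintro rfl
      left
      intro p q
      rw [Matrix.mul_apply]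
      refine Submodule.sum_mem _ fun i _ => ?_
      obtain ⟨c, hc, hc0⟩ := good_one φ hφ1 a h p i
      rw [hc, ← Algebra.smul_def]
      by_cases hpi : p = i
      · rw [hc0 hpi, zero_smul]; exact Submodule.zero_mem _
      · rw [← fin2_eq_sub hpi]
        exact Submodule.smul_mem _ _ (ih.1 (by decide) i q)

lemma alt_imp_free (φ : A →ₗ[ℂ] ℂ) (hφ1 : φ 1 = 1) (a : A) (H : AltWordCond φ a) :
    FreeAmalgOverD φ a := by
  rw [altWordCond_iff] at H
  rw [freeAmalg_iff]
  have hU : ∀ p, ∀ x ∈ uSpan φ a p, φ x = 0 := by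
    intro p x hx
    have : uSpan φ a p ≤ LinearMap.ker φ := by
      refine Submodule.span_le.2 ?_
      rintro y ⟨q, hy⟩
      exact H _ _ _ hy
    exact this hx
  intro t M h
  have h1 := altProd_entries φ hφ1 a h
  by_cases ht : t = 0
  · exact (ED_eq_zero_iff φ hφ1 M).2 fun p => hU _ _ (h1.1 ht p p)
  · have ht1 : t = 1 := by
      omega
    rcases h1.2 ht1 with h2 | h2
    · exact (ED_eq_zero_iff φ hφ1 M).2 fun p => hU _ _ (h2 p p)
    · exact h2.2

lemma diag_mem (a : A) (p : Fin 2) (c : ℂ) : (Matrix.single p p (algebraMap ℂ A c) : M₂ A) ∈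
    Algebra.adjoin ℂ (insert (Amat a) {X : M₂ A | IsDiagScalar X}) := by
  refine Algebra.subset_adjoin (Or.inr ?_)
  fin_cases p
  · exact ⟨⟨c, by simp⟩, ⟨0, by simp⟩, by simp, by simp⟩
  · exact ⟨⟨0, by simp⟩, ⟨c, by simp⟩, by simp, by simp⟩

lemma single_entry_mem (a : A) (p q : Fin 2) : (Matrix.single p q (Amat a p q) : M₂ A) ∈
    Algebra.adjoin ℂ (insert (Amat a) {X : M₂ A | IsDiagScalar X}) := by
  have h0 : Amat a ∈ Algebra.adjoin ℂ (insert (Amat a) {X : M₂ A | IsDiagScalar X}) :=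
    Algebra.subset_adjoin (Or.inl rfl)
  have := mul_mem (mul_mem (diag_mem a p 1) h0) (diag_mem a q 1)
  rw [Matrix.single_mul_mul_single] at this
  simpa using this

lemma single_mul_mem (a : A) (p i q : Fin 2) {x y : A}
    (hx : (Matrix.single p i x : M₂ A) ∈
      Algebra.adjoin ℂ (insert (Amat a) {X : M₂ A | IsDiagScalar X}))
    (hy : (Matrix.single i q y : M₂ A) ∈
      Algebra.adjoin ℂ (insert (Amat a) {X : M₂ A | IsDiagScalar X})) :
    (Matrix.single p q (x * y) : M₂ A) ∈
      Algebra.adjoin ℂ (insert (Amat a) {X : M₂ A | IsDiagScalar X}) := by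
  have := mul_mem hx hy
  rwa [Matrix.single_mul_single_same] at this

lemma single_pow_mem (a : A) (p : Fin 2) {x : A}
    (hx : (Matrix.single p p x : M₂ A) ∈
      Algebra.adjoin ℂ (insert (Amat a) {X : M₂ A | IsDiagScalar X})) (k : ℕ) :
    (Matrix.single p p (x ^ k) : M₂ A) ∈
      Algebra.adjoin ℂ (insert (Amat a) {X : M₂ A | IsDiagScalar X}) := by
  induction k with
  | zero => simpa using diag_mem a p 1
  | succ k ih => rw [pow_succ]; exact single_mul_mem a p p p ih hx

lemma single_sub_mem (a : A) (p : Fin 2) {x y : A}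
    (hx : (Matrix.single p p x : M₂ A) ∈
      Algebra.adjoin ℂ (insert (Amat a) {X : M₂ A | IsDiagScalar X}))
    (hy : (Matrix.single p p y : M₂ A) ∈
      Algebra.adjoin ℂ (insert (Amat a) {X : M₂ A | IsDiagScalar X})) :
    (Matrix.single p p (x - y) : M₂ A) ∈
      Algebra.adjoin ℂ (insert (Amat a) {X : M₂ A | IsDiagScalar X}) := by
  have h := sub_mem hx hy
  have e : (Matrix.single p p (x - y) : M₂ A) = Matrix.single p p x - Matrix.single p p y := by
    rw [eq_sub_iff_add_eq, ← Matrix.single_add, sub_add_cancel]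
  rwa [e]

lemma single_wElt_mem (φ : A →ₗ[ℂ] ℂ) (a : A) (p q : Fin 2) (k : ℕ) :
    (Matrix.single p q (wElt φ a p q k) : M₂ A) ∈
      Algebra.adjoin ℂ (insert (Amat a) {X : M₂ A | IsDiagScalar X}) := by
  have h01 : (Matrix.single 0 1 a : M₂ A) ∈ _ := single_entry_mem a 0 1
  have h10 : (Matrix.single 1 0 (star a) : M₂ A) ∈ _ := single_entry_mem a 1 0
  have h00 := single_pow_mem a 0 (single_mul_mem a _ _ _ h01 h10)
  have h11 := single_pow_mem a 1 (single_mul_mem a _ _ _ h10 h01)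
  fin_cases p <;> fin_cases q <;> simp only [wElt] <;> norm_num
  · exact single_sub_mem a 0 (h00 k) (diag_mem a 0 _)
  · exact single_mul_mem a _ _ _ h01 (h11 _)
  · exact single_mul_mem a _ _ _ h10 (h00 _)
  · exact single_sub_mem a 1 (h11 k) (diag_mem a 1 _)

lemma good_wElt (φ : A →ₗ[ℂ] ℂ) (hφ1 : φ 1 = 1) (a : A) (p q : Fin 2) (k : ℕ) :
    GoodLetter φ a 0 (Matrix.single p q (wElt φ a p q k)) := by
  refine ⟨?_, ?_⟩
  · rw [if_pos rfl]; exact single_wElt_mem φ a p q k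
  · rw [ED_eq_zero_iff φ hφ1]
    intro r
    fin_cases p <;> fin_cases q <;> fin_cases r <;>
      simp [wElt, map_algebraMap φ hφ1]

/-- The flip matrix. -/
def flipMat (A : Type*) [Ring A] : M₂ A := !![0, 1; 1, 0]

lemma good_flip (φ : A →ₗ[ℂ] ℂ) (hφ1 : φ 1 = 1) (a : A) :
    GoodLetter φ a 1 (flipMat A) := by
  refine ⟨?_, ?_⟩
  · rw [if_neg (by decide)]
    intro p q
    fin_cases p <;> fin_cases q
    · exact ⟨0, by simp [flipMat]⟩
    · exact ⟨1, by simp [flipMat]⟩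
    · exact ⟨1, by simp [flipMat]⟩
    · exact ⟨0, by simp [flipMat]⟩
  · rw [ED_eq_zero_iff φ hφ1]
    intro p
    fin_cases p <;> simp [flipMat]

lemma single_mul_flip (p q : Fin 2) (x : A) :
    (Matrix.single p q x : M₂ A) * flipMat A = Matrix.single p (1 - q) x := by
  ext r s
  fin_cases p <;> fin_cases q <;> fin_cases r <;> fin_cases s <;>
    simp [flipMat, Matrix.mul_apply, Fin.sum_univ_two, Matrix.single]

lemma altProd_of_wWord (φ : A →ₗ[ℂ] ℂ) (hφ1 : φ 1 = 1) (a : A) {p q : Fin 2} {x : A}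
    (h : WWord φ a p q x) :
    AltProd φ a 0 (Matrix.single p q x) ∧ AltProd φ a 0 (Matrix.single p (1 - q) x) := by
  have hJ := good_flip φ hφ1 a
  induction h with
  | single p q k hk =>
    have hg := good_wElt φ hφ1 a p q k
    refine ⟨AltProd.single _ _ hg, ?_⟩
    rw [← single_mul_flip]
    exact AltProd.cons _ _ _ hg (AltProd.single _ _ hJ)
  | cons p i q k x hk hx ih =>
    have hg := good_wElt φ hφ1 a p i k
    have key : ∀ r, AltProd φ a 0 (Matrix.single (1 - i) r x) →
        AltProd φ a 0 (Matrix.single p r (wElt φ a p i k * x)) := by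
      intro r hr
      rw [← Matrix.single_mul_single_same (j := 1 - i), ← single_mul_flip, mul_assoc]
      exact AltProd.cons _ _ _ hg (AltProd.cons _ _ _ hJ hr)
    exact ⟨key _ ih.1, key _ ih.2⟩

lemma free_imp_alt (φ : A →ₗ[ℂ] ℂ) (hφ1 : φ 1 = 1) (a : A) (H : FreeAmalgOverD φ a) :
    AltWordCond φ a := by
  rw [freeAmalg_iff] at H
  rw [altWordCond_iff]
  intro p q x h
  obtain ⟨h1, h2⟩ := altProd_of_wWord φ hφ1 a h
  have key : AltProd φ a 0 (Matrix.single p p x) := by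
    by_cases hpq : q = p
    · rwa [hpq] at h1
    · rwa [← fin2_eq_sub hpq] at h2
  have := (ED_eq_zero_iff φ hφ1 _).1 (H _ _ key) p
  simpa using this

/-- Proposition 3.8: `Alg({A} ∪ 𝒟)` and `M₂(ℂ1)` are free with amalgamation over `𝒟`
if and only if `a` satisfies the alternating-word condition (i.e. `a` is R-diagonal). -/
theorem freeAmalgOverD_iff_altWordCond
    (φ : A →ₗ[ℂ] ℂ)
    (hφ1 : φ 1 = 1)
    (hφpos : ∀ x : A, 0 ≤ φ (star x * x))
    (hφtr : ∀ x y : A, φ (x * y) = φ (y * x))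
    (a : A) :
    FreeAmalgOverD φ a ↔ AltWordCond φ a := by
  exact ⟨free_imp_alt φ hφ1 a, alt_imp_free φ hφ1 a⟩
end
end

section
/- Let a, ξ ∈ 𝒜 and set X := [[0, ξ*],[ξ, 0]] ∈ M₂(𝒜). Assume that: (i) φ₂(X Aⁿ) = Σ_{m=1}^{n} φ₂(A^{m−1}) φ₂(A^{n−m}) for every n ≥ 0; and (ii) φ(ξ a (a*a)^m) = φ(ξ* a* (aa*)^m) for every m ≥ 0. Then X fulfills the conjugate relations for A with respect to 𝒟 and η₀: for every n ≥ 0 and all D₀, …, Dₙ ∈ 𝒟, φ₂(X D₀ A D₁ ⋯ A Dₙ) = Σ_{m=1}^{n} φ₂( η₀(E_D(D₀ A ⋯ A D_{m−1})) · Dₘ A ⋯ A Dₙ ). (Algebraic core of the converse direction of Proposition 3.7.) -/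
open scoped BigOperators
open ComplexOrder

noncomputable section

variable {A : Type*} [Ring A] [Algebra ℂ A] [StarRing A]

/-- Selection: index `0` gives `x`, index `1` gives `star x`. -/
def sel {T : Type*} [Star T] (x : T) (i : Fin 2) : T := if i = 0 then x else star x

/-- The word `a_{i₁} ⋯ a_{iₙ}` in `a, a*` given by a list of indices. -/
def wordOf (a : A) (l : List (Fin 2)) : A := (l.map (sel a)).prod

/-- The pair `(ξ, ξ*)` fulfills the conjugate relations for `(a, a*)`. -/
def ConjRel (φ : A →ₗ[ℂ] ℂ) (a ξ : A) : Prop :=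
  ∀ (l : List (Fin 2)) (i : Fin 2),
    φ (sel ξ i * wordOf a l) =
      ∑ m ∈ Finset.range l.length,
        (if l.getD m 0 = i then φ (wordOf a (l.take m)) * φ (wordOf a (l.drop (m + 1)))
         else 0)

/-- The state `φ₂ = tr ⊗ φ` on `M₂(𝒜)`. -/
def phi2 (φ : A →ₗ[ℂ] ℂ) (X : M₂ A) : ℂ := (φ (X 0 0) + φ (X 1 1)) / 2

/-- The matrix `X = [[0, ξ*], [ξ, 0]]`. -/
def Xmat (ξ : A) : M₂ A := !![0, star ξ; ξ, 0]

/-- The conditional expectation `E_M : M₂(𝒜) → M₂(ℂ1)`. -/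
def EM (φ : A →ₗ[ℂ] ℂ) (X : M₂ A) : M₂ A := Matrix.of fun i j => algebraMap ℂ A (φ (X i j))

/-- The map `η([[x₁₁,x₁₂],[x₂₁,x₂₂]]) = [[x₂₂,0],[0,x₁₁]]` (restricting to `η₀` on `𝒟`). -/
def etaM (X : M₂ A) : M₂ A := !![X 1 1, 0; 0, X 0 0]

/-- `chain Am [B₀, B₁, …, Bₙ] = B₀ (Am B₁) (Am B₂) ⋯ (Am Bₙ)`. -/
def chain {T : Type*} [Ring T] (Am : T) : List T → T
  | [] => 1
  | B :: Bs => B * (Bs.map fun C => Am * C).prod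

/-- `X` fulfills the conjugate relations for `Amat a` w.r.t. the matrices satisfying `P`
and the completely positive map `etaM ∘ E`. -/
def MatConjEta (φ : A →ₗ[ℂ] ℂ) (a : A) (X : M₂ A) (P : M₂ A → Prop) (E : M₂ A → M₂ A) :
    Prop :=
  ∀ l : List (M₂ A), l ≠ [] → (∀ C ∈ l, P C) →
    phi2 φ (X * chain (Amat a) l) =
      ∑ m ∈ Finset.range (l.length - 1),
        phi2 φ (etaM (E (chain (Amat a) (l.take (m + 1)))) * chain (Amat a) (l.drop (m + 1)))

/-- Scalar diagonal matrix attached to a pair. -/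
def dg (A : Type*) [Ring A] [Algebra ℂ A] (p : ℂ × ℂ) : M₂ A :=
  !![algebraMap ℂ A p.1, 0; 0, algebraMap ℂ A p.2]

/-- Coefficient of a chain of diagonal matrices. -/
def coef : List (ℂ × ℂ) → ℂ × ℂ
  | [] => (1, 1)
  | p :: L => (p.1 * (coef L).2, p.2 * (coef L).1)

theorem dg_mul (p q : ℂ × ℂ) : dg A p * dg A q = dg A (p.1 * q.1, p.2 * q.2) := by
  simp [dg]
  exact ⟨Algebra.smul_def _ _, Algebra.smul_def _ _⟩

theorem Amat_mul_dg (a : A) (p : ℂ × ℂ) :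
    Amat a * dg A p = dg A (p.2, p.1) * Amat a := by
  simp [dg, Amat]
  rw [Algebra.smul_def, Algebra.smul_def, Algebra.commutes, Algebra.commutes]
  exact ⟨rfl, rfl⟩

theorem prod_map_dg (a : A) (L : List (ℂ × ℂ)) :
    ((L.map (dg A)).map fun C => Amat a * C).prod
      = dg A ((coef L).2, (coef L).1) * Amat a ^ L.length := by
  induction L with
  | nil => simp [coef, dg, Matrix.one_fin_two]
  | cons p L ih =>
    rw [List.map_cons, List.map_cons, List.prod_cons, ih, mul_assoc, ← mul_assoc (dg A p),
      dg_mul, ← mul_assoc, Amat_mul_dg, mul_assoc, ← pow_succ', List.length_cons]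
    rfl

theorem chain_dg (a : A) (L : List (ℂ × ℂ)) (hL : L ≠ []) :
    chain (Amat a) (L.map (dg A)) = dg A (coef L) * Amat a ^ (L.length - 1) := by
  cases L with
  | nil => exact absurd rfl hL
  | cons p L =>
    rw [List.map_cons, chain, prod_map_dg, ← mul_assoc, dg_mul]
    rfl

theorem coef_append (L M : List (ℂ × ℂ)) :
    coef (L ++ M) = if Even L.length
      then ((coef L).1 * (coef M).1, (coef L).2 * (coef M).2)
      else ((coef L).1 * (coef M).2, (coef L).2 * (coef M).1) := by
  induction L with
  | nil => simp [coef]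
  | cons p L ih =>
    rw [List.cons_append, coef, ih, List.length_cons]
    by_cases h : Even L.length <;> simp [h, coef, Nat.even_add_one, mul_assoc]

theorem Amat_pow_even (a : A) (k : ℕ) :
    Amat a ^ (2 * k) = !![(a * star a) ^ k, 0; 0, (star a * a) ^ k] := by
  induction k with
  | zero => simp [Matrix.one_fin_two]
  | succ k ih =>
    rw [mul_add, pow_add, ih]
    simp [Amat, Matrix.mul_fin_two, pow_succ]

theorem Amat_pow_odd (a : A) (k : ℕ) :
    Amat a ^ (2 * k + 1) = !![0, a * (star a * a) ^ k; star a * (a * star a) ^ k, 0] := by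
  rw [pow_succ', Amat_pow_even]
  simp [Amat, Matrix.mul_fin_two]

theorem phi_pow (φ : A →ₗ[ℂ] ℂ) (hφtr : ∀ x y : A, φ (x * y) = φ (y * x)) (a : A) (m : ℕ) :
    φ ((Amat a ^ m) 0 0) = φ ((Amat a ^ m) 1 1) := by
  cases m with
  | zero => simp
  | succ m =>
    have h0 : (Amat a ^ (m + 1)) 0 0 = (Amat a ^ m) 0 1 * star a := by
      rw [pow_succ]; simp [Matrix.mul_apply, Amat]
    have h1 : (Amat a ^ (m + 1)) 1 1 = star a * (Amat a ^ m) 0 1 := by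
      rw [pow_succ']; simp [Matrix.mul_apply, Amat]
    rw [h0, h1, hφtr]

theorem phi2_pow_odd (φ : A →ₗ[ℂ] ℂ) (a : A) (m : ℕ) (hm : ¬ Even m) :
    phi2 φ (Amat a ^ m) = 0 := by
  obtain ⟨k, rfl⟩ := Nat.not_even_iff_odd.mp hm
  rw [Amat_pow_odd]; simp [phi2]

theorem phi_algebraMap_mul (φ : A →ₗ[ℂ] ℂ) (c : ℂ) (x : A) :
    φ (algebraMap ℂ A c * x) = c * φ x := by
  rw [← Algebra.smul_def, map_smul, smul_eq_mul]

theorem phi_mul_algebraMap_mul (φ : A →ₗ[ℂ] ℂ) (c : ℂ) (x y : A) :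
    φ (y * (algebraMap ℂ A c * x)) = c * φ (y * x) := by
  rw [← Algebra.smul_def, mul_smul_comm, map_smul, smul_eq_mul]

theorem lhs_eq (φ : A →ₗ[ℂ] ℂ) (a ξ : A)
    (hsym : ∀ m : ℕ,
      φ (ξ * (a * (star a * a) ^ m)) = φ (star ξ * (star a * (a * star a) ^ m)))
    (c : ℂ × ℂ) (n : ℕ) :
    phi2 φ (Xmat ξ * (dg A c * Amat a ^ n)) =
      (c.1 + c.2) / 2 * phi2 φ (Xmat ξ * Amat a ^ n) := by
  have key : φ (ξ * (Amat a ^ n) 0 1) = φ (star ξ * (Amat a ^ n) 1 0) := by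
    rcases Nat.even_or_odd' n with ⟨k, rfl | rfl⟩
    · rw [Amat_pow_even]; simp
    · rw [Amat_pow_odd]; simpa using hsym k
  simp only [phi2, Xmat, dg, Matrix.mul_apply, Fin.sum_univ_two, Matrix.of_apply,
    Matrix.cons_val_zero, Matrix.cons_val_one, Matrix.cons_val', Matrix.cons_val_fin_one,
    zero_mul, zero_add, add_zero, phi_mul_algebraMap_mul, key]
  ring

theorem rhs_eq (φ : A →ₗ[ℂ] ℂ) (hφtr : ∀ x y : A, φ (x * y) = φ (y * x)) (a : A)
    (c d : ℂ × ℂ) (m k : ℕ) :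
    phi2 φ (etaM (ED φ (dg A c * Amat a ^ m)) * (dg A d * Amat a ^ k)) =
      (c.1 * d.2 + c.2 * d.1) / 2 * (phi2 φ (Amat a ^ m) * phi2 φ (Amat a ^ k)) := by
  have h1 := phi_pow φ hφtr a m
  have h2 := phi_pow φ hφtr a k
  simp only [phi2, etaM, ED, dg, Matrix.mul_apply, Fin.sum_univ_two, Matrix.of_apply,
    Matrix.cons_val_zero, Matrix.cons_val_one, Matrix.cons_val', Matrix.cons_val_fin_one,
    zero_mul, zero_add, add_zero, phi_algebraMap_mul, h1, h2]
  ring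

theorem exists_dg (l : List (M₂ A)) (h : ∀ C ∈ l, IsDiagScalar C) :
    ∃ L : List (ℂ × ℂ), l = L.map (dg A) := by
  induction l with
  | nil => exact ⟨[], rfl⟩
  | cons C l ih =>
    obtain ⟨L, rfl⟩ := ih fun D hD => h D (List.mem_cons_of_mem _ hD)
    obtain ⟨⟨p, hp⟩, ⟨q, hq⟩, h01, h10⟩ := h C List.mem_cons_self
    refine ⟨(p, q) :: L, ?_⟩
    rw [List.map_cons]
    congr 1
    rw [Matrix.eta_fin_two C, hp, hq, h01, h10]
    rfl

/-- Algebraic core of the converse direction of Proposition 3.7: if `X = [[0,ξ*],[ξ,0]]`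
fulfills the conjugate relations for `A` with respect to the scalars, and the moment
symmetry `φ(ξ a (a*a)^m) = φ(ξ* a* (aa*)^m)` holds, then `X` fulfills the conjugate
relations for `A` with respect to `𝒟` and `η₀`. -/
theorem conjugate_relations_D_of_scalars
    (φ : A →ₗ[ℂ] ℂ)
    (hφ1 : φ 1 = 1)
    (hφpos : ∀ x : A, 0 ≤ φ (star x * x))
    (hφtr : ∀ x y : A, φ (x * y) = φ (y * x))
    (a ξ : A)
    (hscal : ∀ n : ℕ,
      phi2 φ (Xmat ξ * Amat a ^ n) =
        ∑ m ∈ Finset.range n, phi2 φ (Amat a ^ m) * phi2 φ (Amat a ^ (n - 1 - m)))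
    (hsym : ∀ m : ℕ,
      φ (ξ * (a * (star a * a) ^ m)) = φ (star ξ * (star a * (a * star a) ^ m))) :
    MatConjEta φ a (Xmat ξ) IsDiagScalar (ED φ) := by
  intro l hl hP
  obtain ⟨L, rfl⟩ := exists_dg l hP
  have hL : L ≠ [] := fun h => hl (by simp [h])
  rw [chain_dg a L hL, lhs_eq φ a ξ hsym, hscal, Finset.mul_sum, List.length_map]
  refine Finset.sum_congr rfl fun m hm => ?_
  have hm' : m < L.length - 1 := Finset.mem_range.mp hm
  have hlt : (L.take (m + 1)).length = m + 1 := by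
    rw [List.length_take]; omega
  have hld : (L.drop (m + 1)).length = L.length - (m + 1) := List.length_drop
  have ht : L.take (m + 1) ≠ [] := by
    intro h; rw [h] at hlt; simp at hlt
  have hd : L.drop (m + 1) ≠ [] := by
    intro h; rw [h, List.length_nil] at hld; omega
  rw [← List.map_take, ← List.map_drop, chain_dg a _ ht, chain_dg a _ hd, rhs_eq φ hφtr,
    hlt, hld, Nat.add_sub_cancel,
    show L.length - (m + 1) - 1 = L.length - 1 - 1 - m by omega]
  by_cases he : Even m
  · have hc := coef_append (L.take (m + 1)) (L.drop (m + 1))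
    rw [List.take_append_drop, hlt, if_neg (by simpa [Nat.even_add_one] using he)] at hc
    rw [hc]
  · rw [phi2_pow_odd φ a m he]; simp
end
end
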